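/- arXiv:0804.3189 — 6 statements merged into one kernel-verified Lean document; each statement's English description precedes it below -/
import Mathlib

section
/- For every real number u > 0, ψ(u+1) + γ = -u ∫₀¹ t^{u-1} log(1-t) dt, where ψ is the digamma function and γ is the Euler–Mascheroni constant. -/
/-- The digamma function: the logarithmic derivative of the Gamma function. -/
noncomputable def digamma (x : ℝ) : ℝ := deriv (fun y => Real.log (Real.Gamma y)) x

open MeasureTheory Set Filter Topology in
theorem beta_ofReal_aux (u v t : ℝ) (h0 : 0 ≤ t) (h1 : t ≤ 1) :
    ((t ^ (u - 1) * (1 - t) ^ (v - 1) : ℝ) : ℂ) =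
      (t : ℂ) ^ ((u : ℂ) - 1) * (1 - (t : ℂ)) ^ ((v : ℂ) - 1) := by
  rw [Complex.ofReal_mul, Complex.ofReal_cpow h0, Complex.ofReal_cpow (by linarith)]
  push_cast
  rfl

open MeasureTheory Set Filter Topology in
theorem beta_integrable_aux (u v : ℝ) (hu : 0 < u) (hv : 0 < v) :
    IntervalIntegrable (fun t : ℝ => t ^ (u - 1) * (1 - t) ^ (v - 1)) volume 0 1 := by
  have h := Complex.betaIntegral_convergent (u := u) (v := v) (by simpa) (by simpa)
  rw [intervalIntegrable_iff, uIoc_of_le zero_le_one] at h ⊢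
  refine IntegrableOn.congr_fun (Integrable.re h) ?_ measurableSet_Ioc
  intro t ht
  simp only
  rw [← beta_ofReal_aux u v t ht.1.le ht.2]
  simp

open MeasureTheory Set Filter Topology in
theorem beta_eq_aux (u v : ℝ) (hu : 0 < u) (hv : 0 < v) :
    ∫ t in (0:ℝ)..1, t ^ (u - 1) * (1 - t) ^ (v - 1) =
      Real.Gamma u * Real.Gamma v / Real.Gamma (u + v) := by
  have h := Complex.betaIntegral_eq_Gamma_mul_div u v (by simpa) (by simpa)
  have h2 : Complex.betaIntegral u v =
      ((∫ t in (0:ℝ)..1, t ^ (u - 1) * (1 - t) ^ (v - 1) : ℝ) : ℂ) := by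
    rw [← intervalIntegral.integral_ofReal, Complex.betaIntegral]
    refine intervalIntegral.integral_congr ?_
    intro t ht
    rw [uIcc_of_le zero_le_one] at ht
    exact (beta_ofReal_aux u v t ht.1 ht.2).symm
  rw [h2, ← Complex.ofReal_add, Complex.Gamma_ofReal, Complex.Gamma_ofReal,
    Complex.Gamma_ofReal] at h
  exact_mod_cast h

open MeasureTheory Set Filter Topology in
theorem beta_deriv_aux (u : ℝ) (hu : 0 < u) :
    HasDerivAt (fun v : ℝ => ∫ t in (0:ℝ)..1, t ^ (u - 1) * (1 - t) ^ (v - 1))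
      (∫ t in (0:ℝ)..1, t ^ (u - 1) * Real.log (1 - t)) 1 := by
  have key := (intervalIntegral.hasDerivAt_integral_of_dominated_loc_of_deriv_le
    (μ := volume) (a := 0) (b := 1) (x₀ := (1:ℝ)) (s := Ioo (1/2 : ℝ) 2)
    (F := fun v t : ℝ => t ^ (u - 1) * (1 - t) ^ (v - 1))
    (F' := fun v t : ℝ => t ^ (u - 1) * ((1 - t) ^ (v - 1) * Real.log (1 - t)))
    (bound := fun t : ℝ => 4 * (t ^ (u - 1) * (1 - t) ^ ((1/4 : ℝ) - 1)))
    (Ioo_mem_nhds (by norm_num) (by norm_num)) ?_ ?_ ?_ ?_ ?_ ?_).2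
  · simpa using key
  · refine Eventually.of_forall fun v => ?_
    exact Measurable.aestronglyMeasurable (by fun_prop)
  · exact beta_integrable_aux u 1 hu one_pos
  · exact Measurable.aestronglyMeasurable (by fun_prop)
  · have hne : ∀ᵐ t : ℝ ∂volume, t ≠ 1 := by simp [ae_iff]
    filter_upwards [hne] with t ht1 ht v hv
    rw [uIoc_of_le zero_le_one] at ht
    have hx : 0 < 1 - t := sub_pos.2 (lt_of_le_of_ne ht.2 ht1)
    have hx1 : 1 - t ≤ 1 := by linarith [ht.1]
    have hl := Real.abs_log_mul_self_rpow_lt (1 - t) (1/4) hx hx1 (by norm_num)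
    have hp : 0 ≤ t ^ (u - 1) := Real.rpow_nonneg ht.1.le _
    have e1 : (1 - t) ^ (v - 1) = (1 - t) ^ (v - 1 - 1/4) * (1 - t) ^ (1/4 : ℝ) := by
      rw [← Real.rpow_add hx]; ring_nf
    have e2 : (1 - t) ^ (v - 1 - 1/4) ≤ (1 - t) ^ ((1/4 : ℝ) - 1) :=
      Real.rpow_le_rpow_of_exponent_ge hx hx1 (by linarith [hv.1])
    have hq : 0 ≤ (1 - t) ^ (v - 1 - 1/4) := Real.rpow_nonneg hx.le _
    rw [e1, norm_mul, Real.norm_of_nonneg hp, mul_assoc, norm_mul, Real.norm_of_nonneg hq,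
      mul_comm _ (Real.log (1 - t)), Real.norm_eq_abs]
    calc _ ≤ t ^ (u - 1) * ((1 - t) ^ ((1/4 : ℝ) - 1) * 4) := by
          gcongr
          linarith
      _ = _ := by ring
  · exact (beta_integrable_aux u (1/4) hu (by norm_num)).const_mul 4
  · have hne : ∀ᵐ t : ℝ ∂volume, t ≠ 1 := by simp [ae_iff]
    filter_upwards [hne] with t ht1 ht v hv
    rw [uIoc_of_le zero_le_one] at ht
    have hx : 0 < 1 - t := sub_pos.2 (lt_of_le_of_ne ht.2 ht1)
    have h := ((hasDerivAt_id v).sub_const 1).const_rpow hx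
    refine (h.const_mul (t ^ (u - 1))).congr_deriv ?_
    simp only [id]
    ring

theorem stmt_2 (u : ℝ) (hu : 0 < u) :
    digamma (u + 1) + Real.eulerMascheroniConstant =
      -u * ∫ t in (0:ℝ)..1, t ^ (u - 1) * Real.log (1 - t) := by
  have h1 := beta_deriv_aux u hu
  have hG : DifferentiableAt ℝ Real.Gamma (u + 1) :=
    Real.differentiableAt_Gamma fun m => by
      have : (0:ℝ) ≤ m := m.cast_nonneg
      intro h; linarith
  have hpos : 0 < Real.Gamma (u + 1) := Real.Gamma_pos_of_pos (by linarith)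
  have hpos' : 0 < Real.Gamma u := Real.Gamma_pos_of_pos hu
  have h2 : HasDerivAt (fun v : ℝ => Real.Gamma u * Real.Gamma v / Real.Gamma (u + v))
      ((Real.Gamma u * (-Real.eulerMascheroniConstant) * Real.Gamma (u + 1) -
        Real.Gamma u * Real.Gamma 1 * deriv Real.Gamma (u + 1)) / Real.Gamma (u + 1) ^ 2) 1 := by
    refine (Real.hasDerivAt_Gamma_one.const_mul (Real.Gamma u)).div ?_ hpos.ne'
    exact hG.hasDerivAt.comp_const_add u 1
  have h3 := h1.congr_of_eventuallyEq
    (f₁ := fun v : ℝ => Real.Gamma u * Real.Gamma v / Real.Gamma (u + v)) (by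
      filter_upwards [lt_mem_nhds (show (0:ℝ) < 1 by norm_num)] with v hv
      exact (beta_eq_aux u v hu hv).symm)
  rw [h3.unique h2, digamma, deriv.log hG hpos.ne', Real.Gamma_one]
  rw [Real.Gamma_add_one hu.ne'] at *
  field_simp
  ring
end

section
/- The sum ∑_{n=1}^∞ H_n / ((2n+1) C(2n,n)) equals the negative of the double integral over the unit square ∫₀¹ ∫₀¹ v(1-v) log(u) / [1 - (1-u) v(1-v)]² du dv. -/
theorem aux_logint (n : ℕ) :
    ∫ u in (0:ℝ)..1, (1 - u) ^ n * Real.log u = -((harmonic (n+1) : ℝ) / (n+1)) := by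
  have hn : (n:ℝ) + 1 ≠ 0 := by positivity
  have geo : ∀ u : ℝ, u * ∑ k ∈ Finset.range (n+1), (1-u)^k = 1 - (1-u)^(n+1) := by
    intro u
    have := mul_neg_geom_sum (1-u) (n+1)
    simpa using this
  have hs : ∀ u : ℝ, HasDerivAt (fun u : ℝ => ∑ k ∈ Finset.range (n+1), (1-u)^(k+1)/((k:ℝ)+1))
      (-∑ k ∈ Finset.range (n+1), (1-u)^k) u := by
    intro u
    rw [← Finset.sum_neg_distrib]
    refine HasDerivAt.fun_sum fun k _ => ?_
    have h := (((hasDerivAt_id u).const_sub 1).pow (k+1)).div_const ((k:ℝ)+1)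
    refine h.congr_deriv ?_
    have hk : (k:ℝ) + 1 ≠ 0 := by positivity
    simp
    field_simp
  have key := intervalIntegral.integral_eq_sub_of_hasDerivAt_of_le (a := 0) (b := 1)
    (f := fun u : ℝ => ((u * Real.log u) * (∑ k ∈ Finset.range (n+1), (1-u)^k)
      + ∑ k ∈ Finset.range (n+1), (1-u)^(k+1)/((k:ℝ)+1)) / ((n:ℝ)+1))
    (f' := fun u : ℝ => (1 - u) ^ n * Real.log u) zero_le_one ?_ ?_ ?_
  · rw [key]
    simp [harmonic, div_eq_mul_inv]
  · apply Continuous.continuousOn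
    have := Real.continuous_mul_log
    fun_prop
  · intro u hu
    have hu0 : u ≠ 0 := hu.1.ne'
    have e : (fun u : ℝ => ((u * Real.log u) * (∑ k ∈ Finset.range (n+1), (1-u)^k)
      + ∑ k ∈ Finset.range (n+1), (1-u)^(k+1)/((k:ℝ)+1)) / ((n:ℝ)+1)) =
      (fun u : ℝ => ((1 - (1-u)^(n+1)) * Real.log u
      + ∑ k ∈ Finset.range (n+1), (1-u)^(k+1)/((k:ℝ)+1)) / ((n:ℝ)+1)) := by
      funext u
      rw [← geo u]; ring
    rw [e]
    have h1 := (((hasDerivAt_id u).const_sub 1).pow (n+1)).const_sub 1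
    have h := ((h1.mul (Real.hasDerivAt_log hu0)).add (hs u)).div_const ((n:ℝ)+1)
    refine h.congr_deriv ?_
    have g := geo u
    simp only [Pi.pow_apply, id]
    rw [← g]
    push_cast
    field_simp
    simp
  · exact intervalIntegral.intervalIntegrable_log'.continuousOn_mul (by fun_prop)

theorem aux_beta (n : ℕ) :
    ∫ v in (0:ℝ)..1, (v * (1 - v)) ^ n = 1 / ((2 * n + 1) * (Nat.choose (2 * n) n)) := by
  rw [← Nat.centralBinom_eq_two_mul_choose]
  induction n with
  | zero => simp
  | succ n ih =>
    have key := intervalIntegral.integral_eq_sub_of_hasDerivAt (a := 0) (b := 1)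
      (f := fun v : ℝ => (1 - 2 * v) * (v * (1 - v)) ^ (n+1))
      (f' := fun v : ℝ => ((n:ℝ)+1) * (v * (1 - v)) ^ n - (4 * n + 6) * (v * (1 - v)) ^ (n+1)) ?_ ?_
    · rw [intervalIntegral.integral_sub, intervalIntegral.integral_const_mul,
        intervalIntegral.integral_const_mul, ih] at key
      · have hc : ((n:ℝ)+1) * (n+1).centralBinom = 2 * (2 * n + 1) * n.centralBinom := by
          exact_mod_cast Nat.succ_mul_centralBinom_succ n
        have p1 : (0:ℝ) < n.centralBinom := by exact_mod_cast n.centralBinom_pos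
        have p2 : (0:ℝ) < (n+1).centralBinom := by exact_mod_cast (n+1).centralBinom_pos
        simp at key
        have hI : ∫ v in (0:ℝ)..1, (v * (1 - v)) ^ (n+1) =
          ((n:ℝ)+1) / ((4 * n + 6) * ((2 * n + 1) * n.centralBinom)) := by
          field_simp
          field_simp at key
          linarith
        rw [hI]
        push_cast
        rw [div_eq_div_iff (by positivity) (by positivity)]
        linear_combination (2 * n + 3 : ℝ) * hc
      · exact Continuous.intervalIntegrable (by fun_prop) _ _
      · exact Continuous.intervalIntegrable (by fun_prop) _ _
    · intro v _
      have h2 : HasDerivAt (fun v : ℝ => 1 - 2 * v) (-2) v := by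
        simpa using ((hasDerivAt_id v).const_mul 2).const_sub 1
      have h3 : HasDerivAt (fun v : ℝ => v * (1 - v)) (1 - 2 * v) v := by
        refine ((hasDerivAt_id v).mul ((hasDerivAt_id v).const_sub 1)).congr_deriv ?_
        simp; ring
      refine (h2.mul (h3.pow (n+1))).congr_deriv ?_
      simp
      ring
    · exact Continuous.intervalIntegrable (by fun_prop) _ _

theorem aux_summable : Summable fun n : ℕ => ((n:ℝ)+1) * (1/4:ℝ)^(n+1) := by
  have := summable_pow_mul_geometric_of_norm_lt_one (R := ℝ) 1 (r := 1/4) (by norm_num)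
  simpa using (summable_nat_add_iff 1).2 this

theorem aux_w {v : ℝ} (hv : v ∈ Set.Icc (0:ℝ) 1) : 0 ≤ v * (1-v) ∧ v * (1-v) ≤ 1/4 :=
  ⟨mul_nonneg hv.1 (by linarith [hv.2]), by nlinarith [sq_nonneg (v-1/2)]⟩

theorem aux_inner {w : ℝ} (h0 : 0 ≤ w) (h1 : w ≤ 1/4) :
    HasSum (fun n : ℕ => -((harmonic (n+1) : ℝ) * w^(n+1)))
      (∫ u in (0:ℝ)..1, w * Real.log u / (1 - (1 - u) * w) ^ 2) := by
  have key := intervalIntegral.hasSum_integral_of_dominated_convergence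
    (μ := MeasureTheory.volume) (a := 0) (b := 1)
    (F := fun (n:ℕ) (u:ℝ) => (((n:ℝ)+1) * w^(n+1)) * ((1-u)^n * Real.log u))
    (f := fun u : ℝ => w * Real.log u / (1 - (1 - u) * w) ^ 2)
    (fun n u => (((n:ℝ)+1) * (1/4:ℝ)^(n+1)) * |Real.log u|) ?_ ?_ ?_ ?_ ?_
  · refine key.congr_fun ?_ |> id
    intro n
    rw [intervalIntegral.integral_const_mul, aux_logint]
    have hn : (n:ℝ) + 1 ≠ 0 := by positivity
    field_simp
  · intro n
    exact (by fun_prop : Measurable _).aestronglyMeasurable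
  · intro n
    refine Filter.Eventually.of_forall fun u hu => ?_
    rw [Set.uIoc_of_le zero_le_one] at hu
    have a1 : 0 ≤ 1 - u := by linarith [hu.2]
    have a2 : (1-u)^n ≤ 1 := pow_le_one₀ a1 (by linarith [hu.1])
    have a3 : 0 ≤ (1-u)^n := by positivity
    rw [Real.norm_eq_abs, abs_mul, abs_mul ((1-u)^n), abs_of_nonneg a3,
      abs_of_nonneg (by positivity : 0 ≤ ((n:ℝ)+1) * w^(n+1))]
    have : (1-u)^n * |Real.log u| ≤ |Real.log u| :=
      mul_le_of_le_one_left (abs_nonneg _) a2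
    gcongr
  · exact Filter.Eventually.of_forall fun u _ => aux_summable.mul_right _
  · simp_rw [tsum_mul_right]
    exact intervalIntegral.intervalIntegrable_log'.abs.const_mul _
  · refine Filter.Eventually.of_forall fun u hu => ?_
    rw [Set.uIoc_of_le zero_le_one] at hu
    have a1 : 0 ≤ 1 - u := by linarith [hu.2]
    have a4 : 0 ≤ (1-u) * w := by positivity
    have a5 : (1-u) * w < 1 := by nlinarith [hu.1]
    have hg := hasSum_choose_mul_geometric_of_norm_lt_one (𝕜 := ℝ) 1 (r := (1-u)*w)
      (by rw [Real.norm_eq_abs, abs_of_nonneg a4]; exact a5)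
    have := hg.mul_right (w * Real.log u)
    have e1 : (fun n : ℕ => (((n:ℝ)+1) * w^(n+1)) * ((1-u)^n * Real.log u)) =
        fun n : ℕ => (((n + 1).choose 1 : ℕ) : ℝ) * ((1 - u) * w) ^ n * (w * Real.log u) := by
      funext n
      rw [Nat.choose_one_right, mul_pow, pow_succ]
      push_cast
      ring
    have e2 : w * Real.log u / (1 - (1 - u) * w) ^ 2 =
        1 / (1 - (1 - u) * w) ^ (1 + 1) * (w * Real.log u) := by
      rw [div_mul_eq_mul_div, one_mul]
    rw [e1, e2]
    exact this

theorem aux_harm (n : ℕ) : (harmonic n : ℝ) ≤ n := by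
  induction n with
  | zero => simp
  | succ n ih =>
    rw [harmonic_succ]
    push_cast
    have : ((n:ℝ)+1)⁻¹ ≤ 1 := inv_le_one_of_one_le₀ (by linarith [n.cast_nonneg (α := ℝ)])
    linarith

theorem aux_harm0 (n : ℕ) : 0 ≤ (harmonic n : ℝ) := by
  simp only [harmonic]; push_cast; positivity

theorem stmt_5 :
    ∑' n : ℕ, (harmonic n : ℝ) / ((2 * n + 1) * (Nat.choose (2 * n) n)) =
      -∫ v in (0:ℝ)..1, ∫ u in (0:ℝ)..1,
        v * (1 - v) * Real.log u / (1 - (1 - u) * v * (1 - v)) ^ 2 := by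
  have key := intervalIntegral.hasSum_integral_of_dominated_convergence
    (μ := MeasureTheory.volume) (a := 0) (b := 1)
    (F := fun (n:ℕ) (v:ℝ) => -((harmonic (n+1) : ℝ) * (v * (1 - v))^(n+1)))
    (f := fun v : ℝ => ∫ u in (0:ℝ)..1,
        v * (1 - v) * Real.log u / (1 - (1 - u) * v * (1 - v)) ^ 2)
    (fun n u => (((n:ℝ)+1) * (1/4:ℝ)^(n+1))) ?_ ?_ ?_ ?_ ?_
  · have k2 : HasSum (fun n : ℕ => (harmonic (n+1) : ℝ) / ((2 * (n+1:ℕ) + 1) * (Nat.choose (2 * (n+1)) (n+1))))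
      (-∫ v in (0:ℝ)..1, ∫ u in (0:ℝ)..1,
        v * (1 - v) * Real.log u / (1 - (1 - u) * v * (1 - v)) ^ 2) := by
      refine key.neg.congr_fun ?_ |> id
      intro n
      rw [intervalIntegral.integral_neg, intervalIntegral.integral_const_mul, aux_beta]
      ring
    have k3 := (hasSum_nat_add_iff (f := fun n : ℕ => (harmonic n : ℝ) / ((2 * n + 1) * (Nat.choose (2 * n) n))) 1).1 k2
    rw [k3.tsum_eq]
    simp
  · intro n
    exact (by fun_prop : Continuous _).aestronglyMeasurable
  · intro n
    refine Filter.Eventually.of_forall fun v hv => ?_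
    rw [Set.uIoc_of_le zero_le_one] at hv
    obtain ⟨w0, w1⟩ := aux_w ⟨hv.1.le, hv.2⟩
    have := aux_harm0 (n+1)
    have h2 := aux_harm (n+1)
    push_cast at h2
    rw [norm_neg, Real.norm_eq_abs, abs_of_nonneg (by positivity)]
    gcongr
  · exact Filter.Eventually.of_forall fun u _ => aux_summable
  · exact intervalIntegrable_const
  · refine Filter.Eventually.of_forall fun v hv => ?_
    rw [Set.uIoc_of_le zero_le_one] at hv
    obtain ⟨w0, w1⟩ := aux_w ⟨hv.1.le, hv.2⟩
    have := aux_inner w0 w1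
    simpa only [mul_assoc] using this
end

section
/- For every real number a with 0 < a < 1, the integral from 0 to 1 of log(u) / [1 - a(1-u)]² du equals log(1-a) / (a(1-a)). -/
theorem stmt_7 (a : ℝ) (ha0 : 0 < a) (ha1 : a < 1) :
    ∫ u in (0:ℝ)..1, Real.log u / (1 - a * (1 - u)) ^ 2 =
      Real.log (1 - a) / (a * (1 - a)) := by
  have h1 : 0 < 1 - a := by linarith
  have hD : ∀ u ∈ Set.Icc (0:ℝ) 1, 1 - a * (1 - u) ≠ 0 := by
    intro u hu
    have := mul_nonneg ha0.le hu.1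
    have : 0 < 1 - a * (1 - u) := by nlinarith
    exact this.ne'
  have key := intervalIntegral.integral_eq_sub_of_hasDerivAt_of_le (a := (0:ℝ)) (b := 1)
    (f := fun u => (u * Real.log u) / ((1 - a) * (1 - a * (1 - u)))
      - Real.log (1 - a * (1 - u)) / (a * (1 - a)))
    (f' := fun u => Real.log u / (1 - a * (1 - u)) ^ 2) zero_le_one ?_ ?_ ?_
  · rw [key]
    simp
  · refine ContinuousOn.sub (ContinuousOn.div Real.continuous_mul_log.continuousOn (by fun_prop) ?_)
      (ContinuousOn.div_const (ContinuousOn.log (by fun_prop) hD) _)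
    intro u hu
    exact mul_ne_zero h1.ne' (hD u hu)
  · intro u hu
    have hd := hD u ⟨hu.1.le, hu.2.le⟩
    have hu0 : u ≠ 0 := hu.1.ne'
    have e : HasDerivAt (fun u : ℝ => 1 - a * (1 - u)) a u := by
      have := (((hasDerivAt_id u).const_sub 1).const_mul a).const_sub 1
      simpa using this
    have e2 := ((Real.hasDerivAt_mul_log hu0).div (e.const_mul (1 - a))
      (mul_ne_zero h1.ne' hd)).sub ((e.log hd).div_const (a * (1 - a)))
    refine HasDerivAt.congr_deriv e2 ?_
    have h1' := h1.ne'
    have ha' := ha0.ne'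
    generalize hL : Real.log u = L
    obtain ⟨D, hDD⟩ : ∃ D, D = 1 - a * (1 - u) := ⟨_, rfl⟩
    rw [← hDD] at hd ⊢
    field_simp
    rw [hDD]
    ring
  · have hc : ContinuousOn (fun u : ℝ => ((1 - a * (1 - u)) ^ 2)⁻¹) (Set.uIcc 0 1) := by
      rw [Set.uIcc_of_le zero_le_one]
      exact ContinuousOn.inv₀ (by fun_prop) fun u hu => pow_ne_zero 2 (hD u hu)
    have := (intervalIntegral.intervalIntegrable_log' (a := 0) (b := 1)).mul_continuousOn hc
    simpa only [div_eq_mul_inv] using this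
end

section
/- For every real number v with 0 < v < 1, the integral from 0 to 1 (in u) of v(1-v) log(u) / [1 - (1-u) v(1-v)]² du equals log(1 - v(1-v)) / (1 - v(1-v)). -/
theorem stmt_8 (v : ℝ) (hv0 : 0 < v) (hv1 : v < 1) :
    ∫ u in (0:ℝ)..1, v * (1 - v) * Real.log u / (1 - (1 - u) * v * (1 - v)) ^ 2 =
      Real.log (1 - v * (1 - v)) / (1 - v * (1 - v)) := by
  have hD : ∀ u : ℝ, 1 - (1 - u) * v * (1 - v) = (1 - v * (1 - v)) + v * (1 - v) * u := by
    intro u; ring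
  simp only [hD]
  have ha0 : 0 < v * (1 - v) := mul_pos hv0 (by linarith)
  have hb0 : 0 < 1 - v * (1 - v) := by nlinarith [sq_nonneg (v - 1)]
  generalize v * (1 - v) = a at *
  have hpos : ∀ u : ℝ, 0 ≤ u → 0 < 1 - a + a * u := fun u hu => by positivity
  have key := intervalIntegral.integral_eq_sub_of_hasDerivAt_of_le (a := (0:ℝ)) (b := 1)
    (f := fun u => a * (u * Real.log u) / ((1 - a) * (1 - a + a * u))
      - Real.log (1 - a + a * u) / (1 - a))
    (f' := fun u => a * Real.log u / (1 - a + a * u) ^ 2) zero_le_one ?_ ?_ ?_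
  · rw [key]; simp
  · have h1 : ContinuousOn (fun u : ℝ => u * Real.log u) (Set.Icc 0 1) :=
      Real.continuous_mul_log.continuousOn
    have h2 : ContinuousOn (fun u : ℝ => 1 - a + a * u) (Set.Icc 0 1) := by fun_prop
    refine ((continuousOn_const.mul h1).div (continuousOn_const.mul h2) ?_).sub
      ((h2.log ?_).div_const _)
    · intro u hu; exact (mul_pos hb0 (hpos u hu.1)).ne'
    · intro u hu; exact (hpos u hu.1).ne'
  · intro u hu
    have hp := hpos u hu.1.le
    have hu0 : u ≠ 0 := hu.1.ne'
    have h2 : HasDerivAt (fun u : ℝ => 1 - a + a * u) a u := by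
      simpa using ((hasDerivAt_id u).const_mul a).const_add (1 - a)
    have h1 := Real.hasDerivAt_mul_log hu0
    have := ((h1.const_mul a).div (h2.const_mul (1 - a)) (mul_pos hb0 hp).ne').sub
      ((h2.log hp.ne').div_const (1 - a))
    refine HasDerivAt.congr_deriv this ?_
    have := hp.ne'
    have := hb0.ne'
    field_simp
    ring
  · have h : ContinuousOn (fun u : ℝ => a / (1 - a + a * u) ^ 2) (Set.uIcc 0 1) := by
      refine continuousOn_const.div (by fun_prop) ?_
      intro u hu
      rw [Set.uIcc_of_le zero_le_one] at hu
      exact (pow_pos (hpos u hu.1) 2).ne'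
    have := (intervalIntegral.intervalIntegrable_log' (a := 0) (b := 1)).mul_continuousOn h
    refine this.congr ?_
    intro u _
    simp only
    ring
end

section
/- For every real number x with -π < x < π, the complex identity log(1 + e^{ix}) = log(2 cos(x/2)) + i x/2 holds, where log on the left is the principal branch of the complex logarithm. -/
theorem stmt_10 (x : ℝ) (hx1 : -Real.pi < x) (hx2 : x < Real.pi) :
    Complex.log (1 + Complex.exp (x * Complex.I)) =
      (Real.log (2 * Real.cos (x / 2)) : ℂ) + (x / 2 : ℝ) * Complex.I := by
  have hc : 0 < 2 * Real.cos (x / 2) :=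
    mul_pos two_pos (Real.cos_pos_of_mem_Ioo ⟨by linarith, by linarith⟩)
  have hpi := Real.pi_pos
  have key : 1 + Complex.exp (x * Complex.I) =
      ((2 * Real.cos (x / 2) : ℝ) : ℂ) * Complex.exp ((x / 2 : ℝ) * Complex.I) := by
    push_cast
    rw [Complex.cos, mul_div_cancel₀ _ (two_ne_zero (α := ℂ)), add_mul, ← Complex.exp_add, ← Complex.exp_add]
    have h1 : (x / 2 : ℂ) * Complex.I + x / 2 * Complex.I = x * Complex.I := by ring
    have h2 : -(x / 2 : ℂ) * Complex.I + x / 2 * Complex.I = 0 := by ring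
    rw [h1, h2, Complex.exp_zero, add_comm]
  have him : (((x / 2 : ℝ) : ℂ) * Complex.I).im = x / 2 := by
    rw [Complex.im_ofReal_mul, Complex.I_im, mul_one]
  rw [key, Complex.log_ofReal_mul hc (Complex.exp_ne_zero _),
    Complex.log_exp (by rw [him]; linarith) (by rw [him]; linarith)]
end

section
/- The integral ∫₀¹ log(1 - v(1-v)) / (1 - v(1-v)) dv equals (π/(3√3)) log 3 + (2/√3) δ₁, where δ₁ is the real number given by δ₁ = i ∑_{n=1}^∞ [((√3 + i)/(2√3))^n - ((√3 - i)/(2√3))^n] / n². -/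
noncomputable def myLi (z : ℂ) : ℂ := ∑' n : ℕ, z ^ (n + 1) / ((n : ℂ) + 1) ^ 2

lemma my_summable (z : ℂ) (hz : ‖z‖ < 1) :
    Summable (fun n : ℕ => z ^ (n + 1) / ((n : ℂ) + 1) ^ 2) := by
  refine Summable.of_norm_bounded (g := fun n : ℕ => ‖z‖ ^ n)
    (summable_geometric_of_lt_one (norm_nonneg _) hz) ?_
  intro n
  have h1 : ‖((n : ℂ) + 1)‖ = (n : ℝ) + 1 := by
    have := Complex.norm_natCast (n + 1)
    push_cast at this
    exact this
  rw [norm_div, norm_pow, norm_pow, h1, pow_succ]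
  have h0 : (0 : ℝ) ≤ n := Nat.cast_nonneg n
  rw [div_le_iff₀ (by positivity)]
  have hp : 0 ≤ ‖z‖ ^ n := by positivity
  apply mul_le_mul_of_nonneg_left _ hp
  nlinarith

lemma my_deriv (z : ℂ) (hz : ‖z‖ < 9 / 10) (hz0 : z ≠ 0) :
    HasDerivAt myLi (-Complex.log (1 - z) / z) z := by
  have key : HasDerivAt (fun y : ℂ => ∑' n : ℕ, y ^ (n + 1) / ((n : ℂ) + 1) ^ 2)
      (∑' n : ℕ, z ^ n / ((n : ℂ) + 1)) z := by
    refine hasDerivAt_tsum_of_isPreconnected (u := fun n : ℕ => (9 / 10 : ℝ) ^ n)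
      (t := Metric.ball (0 : ℂ) (9 / 10)) (y₀ := 0)
      (g := fun (n : ℕ) (y : ℂ) => y ^ (n + 1) / ((n : ℂ) + 1) ^ 2)
      (g' := fun (n : ℕ) (y : ℂ) => y ^ n / ((n : ℂ) + 1))
      (summable_geometric_of_lt_one (by norm_num) (by norm_num))
      Metric.isOpen_ball (convex_ball _ _).isPreconnected ?_ ?_ ?_ ?_ ?_
    · intro n y _
      have h0 : (n : ℂ) + 1 ≠ 0 := Nat.cast_add_one_ne_zero n
      have := (hasDerivAt_pow (n + 1) y).div_const (((n : ℂ) + 1) ^ 2)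
      refine this.congr_deriv ?_
      rw [Nat.add_sub_cancel]
      push_cast
      field_simp
    · intro n y hy
      have hy' : ‖y‖ < 9 / 10 := by simpa using hy
      have h1 : ‖((n : ℂ) + 1)‖ = (n : ℝ) + 1 := by
        have := Complex.norm_natCast (n + 1)
        push_cast at this
        exact this
      rw [norm_div, norm_pow, h1]
      have h0 : (0 : ℝ) ≤ n := Nat.cast_nonneg n
      calc ‖y‖ ^ n / ((n : ℝ) + 1) ≤ ‖y‖ ^ n := div_le_self (by positivity) (by linarith)
        _ ≤ _ := pow_le_pow_left₀ (norm_nonneg _) hy'.le n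
    · simp
    · exact my_summable 0 (by simp)
    · simpa using hz
  have hs := Complex.hasSum_taylorSeries_neg_log (z := z) (by linarith)
  have hs2 := (hasSum_nat_add_iff' 1).mpr hs
  simp only [Finset.range_one, Finset.sum_singleton, pow_zero, Nat.cast_zero, div_zero,
    sub_zero] at hs2
  have hs3 := (hs2.div_const z).tsum_eq
  have : (∑' n : ℕ, z ^ n / ((n : ℂ) + 1)) = -Complex.log (1 - z) / z := by
    rw [← hs3]
    apply tsum_congr
    intro n
    have h0 : (n : ℂ) + 1 ≠ 0 := Nat.cast_add_one_ne_zero n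
    push_cast
    field_simp
    ring
  rw [this] at key
  exact key

lemma log_a : Complex.log (((Real.sqrt 3 : ℂ) + Complex.I) / (2 * (Real.sqrt 3 : ℂ))) =
    -(Real.log 3 : ℂ) / 2 + (Real.pi / 6 : ℝ) * Complex.I := by
  have h3 : (0 : ℝ) < Real.sqrt 3 := by positivity
  have h3c : (Real.sqrt 3 : ℂ) ≠ 0 := by exact_mod_cast h3.ne'
  have e : ((Real.sqrt 3 : ℂ) + Complex.I) / (2 * (Real.sqrt 3 : ℂ)) =
      ((1 / Real.sqrt 3 : ℝ) : ℂ) * Complex.exp ((Real.pi / 6 : ℝ) * Complex.I) := by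
    rw [Complex.exp_mul_I, ← Complex.ofReal_cos, ← Complex.ofReal_sin, Real.cos_pi_div_six,
      Real.sin_pi_div_six]
    push_cast
    field_simp
  have hpi := Real.pi_pos
  rw [e, Complex.log_ofReal_mul (by positivity) (Complex.exp_ne_zero _), Complex.log_exp]
  · rw [one_div, Real.log_inv, Real.log_sqrt (by norm_num)]
    push_cast
    ring
  · simp; linarith
  · simp; linarith

lemma log_b : Complex.log (((Real.sqrt 3 : ℂ) - Complex.I) / (2 * (Real.sqrt 3 : ℂ))) =
    -(Real.log 3 : ℂ) / 2 - (Real.pi / 6 : ℝ) * Complex.I := by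
  have h3 : (0 : ℝ) < Real.sqrt 3 := by positivity
  have h3c : (Real.sqrt 3 : ℂ) ≠ 0 := by exact_mod_cast h3.ne'
  have e : ((Real.sqrt 3 : ℂ) - Complex.I) / (2 * (Real.sqrt 3 : ℂ)) =
      ((1 / Real.sqrt 3 : ℝ) : ℂ) * Complex.exp ((-(Real.pi / 6) : ℝ) * Complex.I) := by
    rw [Complex.exp_mul_I, ← Complex.ofReal_cos, ← Complex.ofReal_sin, Real.cos_neg, Real.sin_neg,
      Real.cos_pi_div_six, Real.sin_pi_div_six]
    push_cast
    field_simp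
    ring
  have hpi := Real.pi_pos
  rw [e, Complex.log_ofReal_mul (by positivity) (Complex.exp_ne_zero _), Complex.log_exp]
  · rw [one_div, Real.log_inv, Real.log_sqrt (by norm_num)]
    push_cast
    ring
  · simp; linarith
  · simp; linarith

noncomputable def yy (v : ℝ) : ℂ := ⟨1 / 2, (v - 1 / 2) / Real.sqrt 3⟩

lemma yy_eq (v : ℝ) : yy v = 1 / 2 + ((v : ℂ) - 1 / 2) * (Complex.I / (Real.sqrt 3 : ℂ)) := by
  have : yy v = ((1 / 2 : ℝ) : ℂ) + (((v - 1 / 2) / Real.sqrt 3 : ℝ) : ℂ) * Complex.I := by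
    rw [yy, Complex.mk_eq_add_mul_I]
  rw [this]
  push_cast
  ring

lemma yy_conj (v : ℝ) : 1 - yy v = (starRingEnd ℂ) (yy v) := by
  apply Complex.ext
  · simp [yy]; norm_num
  · simp [yy]

lemma yy_normSq (v : ℝ) : Complex.normSq (yy v) = (1 - v * (1 - v)) / 3 := by
  have hs : Real.sqrt 3 * Real.sqrt 3 = 3 := Real.mul_self_sqrt (by norm_num)
  simp only [yy, Complex.normSq_mk, div_mul_div_comm, hs]
  ring

lemma yy_mul (v : ℝ) : yy v * (1 - yy v) = (((1 - v * (1 - v)) / 3 : ℝ) : ℂ) := by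
  rw [yy_conj, Complex.mul_conj, yy_normSq]

lemma yy_log (v : ℝ) : Complex.log (yy v) + Complex.log (1 - yy v) + (Real.log 3 : ℂ) =
    (Real.log (1 - v * (1 - v)) : ℂ) := by
  have hpos : 0 < 1 - v * (1 - v) := by nlinarith [sq_nonneg (v - 1 / 2)]
  have harg : (yy v).arg ≠ Real.pi := by
    intro h
    have := (Complex.arg_eq_pi_iff.mp h).1
    simp [yy] at this
    linarith
  rw [yy_conj, Complex.log_conj _ harg, Complex.add_conj, Complex.log_re]
  have h2 : 2 * Real.log ‖yy v‖ = Real.log (1 - v * (1 - v)) - Real.log 3 := by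
    rw [← Real.log_div hpos.ne' (by norm_num), ← yy_normSq, Complex.normSq_eq_norm_sq,
      Real.log_pow]
    norm_num
  rw [h2]
  push_cast
  ring

lemma yy_norm (v : ℝ) (h0 : 0 ≤ v) (h1 : v ≤ 1) : ‖yy v‖ < 9 / 10 := by
  have h := yy_normSq v
  rw [Complex.normSq_eq_norm_sq] at h
  have : ‖yy v‖ ^ 2 ≤ 1 / 3 := by rw [h]; nlinarith
  nlinarith [norm_nonneg (yy v)]

noncomputable def BB (y : ℂ) : ℂ :=
  (Complex.log y ^ 2 - Complex.log (1 - y) ^ 2) / 2 - (myLi y - myLi (1 - y)) +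
    (Real.log 3 : ℂ) * (Complex.log y - Complex.log (1 - y))

lemma BB_deriv (v : ℝ) (h0 : 0 ≤ v) (h1 : v ≤ 1) :
    HasDerivAt BB ((Complex.log (yy v) + Complex.log (1 - yy v) + (Real.log 3 : ℂ)) /
      (yy v * (1 - yy v))) (yy v) := by
  have hn := yy_norm v h0 h1
  have hn' : ‖1 - yy v‖ < 9 / 10 := by rw [yy_conj, RCLike.norm_conj]; exact hn
  have hre : (yy v).re = 1 / 2 := rfl
  have hre' : (1 - yy v).re = 1 / 2 := by rw [Complex.sub_re, hre]; norm_num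
  have hy : yy v ≠ 0 := by intro h; rw [h] at hre; norm_num at hre
  have hy' : 1 - yy v ≠ 0 := by intro h; rw [h] at hre'; norm_num at hre'
  have hs : yy v ∈ Complex.slitPlane := Or.inl (by rw [hre]; norm_num)
  have hs' : 1 - yy v ∈ Complex.slitPlane := Or.inl (by rw [hre']; norm_num)
  have hsub : HasDerivAt (fun y : ℂ => 1 - y) (-1) (yy v) := (hasDerivAt_id _).const_sub 1
  have d1 := Complex.hasDerivAt_log hs
  have d2 := hsub.clog hs'
  have d3 := my_deriv _ hn hy
  have d4 := (my_deriv _ hn' hy').comp (yy v) hsub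
  have := ((((d1.pow 2).sub (d2.pow 2)).div_const 2).sub (d3.sub d4)).add
    ((d1.sub d2).const_mul (Real.log 3 : ℂ))
  refine this.congr_deriv ?_
  rw [sub_sub_cancel]
  field_simp
  push_cast
  ring

theorem stmt_12 (δ₁ : ℝ)
    (hδ : (δ₁ : ℂ) = Complex.I * ∑' n : ℕ,
        ((((Real.sqrt 3 : ℂ) + Complex.I) / (2 * (Real.sqrt 3 : ℂ))) ^ (n + 1) -
          (((Real.sqrt 3 : ℂ) - Complex.I) / (2 * (Real.sqrt 3 : ℂ))) ^ (n + 1)) /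
        ((n : ℂ) + 1) ^ 2) :
    ∫ v in (0:ℝ)..1, Real.log (1 - v * (1 - v)) / (1 - v * (1 - v)) =
      Real.pi / (3 * Real.sqrt 3) * Real.log 3 + (2 / Real.sqrt 3) * δ₁ := by
  have h3 : (0 : ℝ) < Real.sqrt 3 := by positivity
  have h3c : (Real.sqrt 3 : ℂ) ≠ 0 := by exact_mod_cast h3.ne'
  have hsq : (Real.sqrt 3 : ℂ) ^ 2 = 3 := by
    exact_mod_cast Real.sq_sqrt (show (0 : ℝ) ≤ 3 by norm_num)
  have hI := Complex.I_ne_zero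
  have ha : yy 1 = ((Real.sqrt 3 : ℂ) + Complex.I) / (2 * (Real.sqrt 3 : ℂ)) := by
    rw [yy_eq]; push_cast; field_simp; ring
  have hb : yy 0 = ((Real.sqrt 3 : ℂ) - Complex.I) / (2 * (Real.sqrt 3 : ℂ)) := by
    rw [yy_eq]; push_cast; field_simp; ring
  have hab : 1 - yy 1 = yy 0 := by rw [ha, hb]; field_simp; ring
  have hba : 1 - yy 0 = yy 1 := by rw [← hab]; ring
  have hδ' : (δ₁ : ℂ) = Complex.I * (myLi (yy 1) - myLi (yy 0)) := by
    rw [hδ, myLi, myLi, ← Summable.tsum_sub, ha, hb]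
    · congr 1
      apply tsum_congr
      intro n
      rw [sub_div]
    · exact my_summable _ ((yy_norm 1 (by norm_num) (by norm_num)).trans (by norm_num))
    · exact my_summable _ ((yy_norm 0 (by norm_num) (by norm_num)).trans (by norm_num))
  have hint : ∫ v in (0:ℝ)..1, ((Real.log (1 - v * (1 - v)) / (1 - v * (1 - v)) : ℝ) : ℂ) =
      BB (yy 1) / (Complex.I * (Real.sqrt 3 : ℂ)) - BB (yy 0) / (Complex.I * (Real.sqrt 3 : ℂ)) := by
    refine intervalIntegral.integral_eq_sub_of_hasDerivAt
      (f := fun v : ℝ => BB (yy v) / (Complex.I * (Real.sqrt 3 : ℂ))) ?_ ?_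
    · intro v hv
      rw [Set.uIcc_of_le zero_le_one] at hv
      have hyd : HasDerivAt yy (Complex.I / (Real.sqrt 3 : ℂ)) v := by
        have e : yy = fun v : ℝ => 1 / 2 + ((v : ℂ) - 1 / 2) * (Complex.I / (Real.sqrt 3 : ℂ)) :=
          funext yy_eq
        rw [e]
        have := (((Complex.ofRealCLM.hasDerivAt (x := v)).sub_const (1 / 2 : ℂ)).mul_const
          (Complex.I / (Real.sqrt 3 : ℂ))).const_add (1 / 2 : ℂ)
        simpa using this
      have := ((BB_deriv v hv.1 hv.2).comp v hyd).div_const (Complex.I * (Real.sqrt 3 : ℂ))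
      refine this.congr_deriv ?_
      have hpos : 0 < 1 - v * (1 - v) := by nlinarith [sq_nonneg (v - 1 / 2)]
      have hc : ((1 - v * (1 - v) : ℝ) : ℂ) ≠ 0 := by exact_mod_cast hpos.ne'
      rw [yy_log, yy_mul, Complex.ofReal_div, Complex.ofReal_div]
      generalize ((1 - v * (1 - v) : ℝ) : ℂ) = q at *
      push_cast
      field_simp
      rw [hsq]
    · apply ContinuousOn.intervalIntegrable
      apply Continuous.continuousOn
      apply Complex.continuous_ofReal.comp
      have hpos : ∀ v : ℝ, 1 - v * (1 - v) ≠ 0 := fun v => by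
        have : 0 < 1 - v * (1 - v) := by nlinarith [sq_nonneg (v - 1 / 2)]
        exact this.ne'
      exact (Continuous.log (by fun_prop) hpos).div (by fun_prop) hpos
  rw [intervalIntegral.integral_ofReal] at hint
  apply Complex.ofReal_injective
  rw [hint]
  have e : (((Real.pi / (3 * Real.sqrt 3) * Real.log 3 + (2 / Real.sqrt 3) * δ₁ : ℝ)) : ℂ) =
    (Real.pi : ℂ) / (3 * (Real.sqrt 3 : ℂ)) * (Real.log 3 : ℂ) + (2 / (Real.sqrt 3 : ℂ)) * δ₁ := by
    simp only [Complex.ofReal_add, Complex.ofReal_mul, Complex.ofReal_div, Complex.ofReal_ofNat]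
  rw [e, hδ', BB, BB, hab, hba]
  have l1 := log_a
  have l0 := log_b
  rw [← ha] at l1
  rw [← hb] at l0
  rw [l1, l0, Complex.ofReal_div]
  generalize myLi (yy 1) = A
  generalize myLi (yy 0) = B
  generalize (Real.log 3 : ℂ) = L
  push_cast
  field_simp
  ring_nf
  simp only [Complex.I_sq]
  ring
end
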